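/- Let (X,κ) be a finite digital image whose simplicial Euler characteristic χ(X) is nonzero, and let f : X → X be a continuous self-map strongly homotopic to the identity map of X. Then f has a fixed point or f has at least two distinct approximate fixed points. -/

import Mathlib

/-- A function `f : (X,κ) → (Y,λ)` between digital images is (digitally) continuous if
whenever `x, y` are `κ`-adjacent, `f x = f y` or `f x, f y` are `λ`-adjacent. -/
def DigCont {X Y : Type*} (κ : X → X → Prop) (lam : Y → Y → Prop) (f : X → Y) : Prop :=
  ∀ x y, κ x y → f x = f y ∨ lam (f x) (f y)

/-- A clique of `(X,κ)`: a nonempty set of mutually `κ`-adjacent points. -/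
def IsClique {X : Type*} (κ : X → X → Prop) (S : Finset X) : Prop :=
  S.Nonempty ∧ ∀ x ∈ S, ∀ y ∈ S, x ≠ y → κ x y

/-- `x` is an approximate fixed point of `f`: `f x = x` or `f x` is adjacent to `x`. -/
def ApproxFix {X : Type*} (κ : X → X → Prop) (f : X → X) (x : X) : Prop :=
  f x = x ∨ κ x (f x)

/-- A strong homotopy between `f, g : (X,κ) → (Y,λ)` is `H : X × {0,…,m} → Y` with
`H(x,0) = f(x)`, `H(x,m) = g(x)`, such that whenever (`x = x′` or `x,x′` are `κ`-adjacent)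
and `|t − t′| ≤ 1`, with `(x,t) ≠ (x′,t′)`, the values `H(x,t), H(x′,t′)` are equal or
`λ`-adjacent.  `f ≃* g` iff such an `H` exists. -/
def StrongHomotopic {X Y : Type*} (κ : X → X → Prop) (lam : Y → Y → Prop)
    (f g : X → Y) : Prop :=
  ∃ (m : ℕ) (H : X → ℕ → Y),
    (∀ x, H x 0 = f x) ∧ (∀ x, H x m = g x) ∧
    ∀ x x' (t t' : ℕ), t ≤ m → t' ≤ m → (x = x' ∨ κ x x') →
      (t = t' ∨ t + 1 = t' ∨ t' + 1 = t) → (x ≠ x' ∨ t ≠ t') →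
      (H x t = H x' t' ∨ lam (H x t) (H x' t'))

/-- The permutation induced by `f` on a finite set `S` with `f(S) = S`. -/
noncomputable def fixedSetPerm {X : Type*} [DecidableEq X] (f : X → X) (S : Finset X)
    (h : S.image f = S) : Equiv.Perm {x // x ∈ S} :=
  Equiv.ofBijective
    (fun x => ⟨f x.1, by
      have hx : f x.1 ∈ S.image f := Finset.mem_image_of_mem f x.2
      rwa [h] at hx⟩)
    (by
      rw [Fintype.bijective_iff_surjective_and_card]
      refine ⟨fun y => ?_, rfl⟩
      have hy : (y : X) ∈ S.image f := by rw [h]; exact y.2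
      obtain ⟨x, hx, hfx⟩ := Finset.mem_image.mp hy
      exact ⟨⟨x, hx⟩, Subtype.ext hfx⟩)

open Classical in
/-- The simplicial Lefschetz number `L(f) = ∑_S (−1)^{|S|−1} sgn(f|_S)`, summing over all
cliques `S` of `(X,κ)` with `f(S) = S`. -/
noncomputable def simpLef {X : Type*} [Fintype X] [DecidableEq X]
    (κ : X → X → Prop) (f : X → X) : ℤ :=
  ∑ S : Finset X,
    if h : IsClique κ S ∧ S.image f = S then
      (-1 : ℤ) ^ (S.card - 1) * ((Equiv.Perm.sign (fixedSetPerm f S h.2) : ℤˣ) : ℤ)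
    else 0

open Classical in
/-- The simplicial Euler characteristic `χ(X) = ∑_{q≥0} (−1)^q s_q`, where `s_q` is the
number of cliques of `X` with exactly `q+1` points; equivalently `∑_S (−1)^{|S|−1}` over
all cliques `S`. -/
noncomputable def simpEuler {X : Type*} [Fintype X] (κ : X → X → Prop) : ℤ :=
  ∑ S : Finset X, if IsClique κ S then (-1 : ℤ) ^ (S.card - 1) else 0

/-!
The Euler characteristic of a finite poset is the total mass of its unique coweighting `k`, the
function with `∑_{y ≤ x} k y = 1` for all `x`. Pushing `k` forward along the lower adjoint of a
Galois connection gives a coweighting again, so Galois-connected posets have the same Euler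
characteristic. If `φ ≤ ψ` are monotone self-maps, then the least fixed point of `ψ` above a fixed
point of `φ` and the greatest fixed point of `φ` below a fixed point of `ψ` are adjoint, so the two
fixed-point posets have the same Euler characteristic.

For consecutive levels `f, g` of a strong homotopy, `S ↦ f(S) ∪ g(S)` is a monotone self-map of the
poset of cliques lying above both `S ↦ f(S)` and `S ↦ g(S)`. Hence the `f`-invariant cliques have
the same Euler characteristic as the cliques invariant under the identity, which is `χ(X)`. As this
is nonzero, there is an `f`-invariant clique, and all its points are approximate fixed points.
-/

open Function (fixedPoints)
open Relation (ReflTransGen)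

section EulerChar

variable {α β : Type*}

open Classical in
/-- A coweighting on a finite preorder, in Leinster's sense: a solution of the linear system
`∑_{y ≤ x} k y = 1` for all `x`. -/
def IsCoweighting [Preorder α] [Fintype α] (k : α → ℤ) : Prop :=
  ∀ x, ∑ y with y ≤ x, k y = 1

open Classical in
theorem isCoweighting_iff_eq_one_sub [PartialOrder α] [Fintype α] {k : α → ℤ} :
    IsCoweighting k ↔ ∀ x, k x = 1 - ∑ y with y < x, k y := by
  refine forall_congr' fun x => ?_
  have split_top : Finset.univ.filter (· ≤ x) = insert x (Finset.univ.filter (· < x)) := by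
    ext y
    simp [le_iff_eq_or_lt]
  rw [split_top, Finset.sum_insert (by simp), eq_sub_iff_add_eq]

theorem IsCoweighting.unique [PartialOrder α] [Fintype α] {k k' : α → ℤ}
    (hk : IsCoweighting k) (hk' : IsCoweighting k') : k = k' := by
  classical
  rw [isCoweighting_iff_eq_one_sub] at hk hk'
  funext x
  induction x using WellFoundedLT.induction with
  | ind x ih =>
    rw [hk x, hk' x]
    congr 1
    exact Finset.sum_congr rfl fun y hy => ih y (Finset.mem_filter.mp hy).2

open Classical in
theorem IsCoweighting.map_of_galoisConnection [Preorder α] [Preorder β] [Fintype α] [Fintype β]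
    {l : α → β} {u : β → α} (gc : GaloisConnection l u) {k : α → ℤ} (hk : IsCoweighting k) :
    IsCoweighting fun b => ∑ a with l a = b, k a := fun b =>
  calc ∑ b' with b' ≤ b, ∑ a with l a = b', k a
      = ∑ a with l a ≤ b, k a := by
        simpa only [Finset.mem_filter_univ] using
          Finset.sum_fiberwise_eq_sum_filter Finset.univ {b' | b' ≤ b} l k
    _ = ∑ a with a ≤ u b, k a := by simp only [gc _ _]
    _ = 1 := hk (u b)

open Classical in
/-- The coweighting of a finite poset, computed by recursion from the minimal elements upwards. -/
noncomputable def coweight [PartialOrder α] [Fintype α] (x : α) : ℤ :=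
  1 - ∑ y : {y // y < x}, coweight y.1
termination_by wellFounded_lt.wrap x
decreasing_by exact y.2

theorem isCoweighting_coweight [PartialOrder α] [Fintype α] :
    IsCoweighting (coweight : α → ℤ) := by
  classical
  refine isCoweighting_iff_eq_one_sub.mpr fun x => ?_
  rw [coweight, Finset.sum_subtype _ fun _ => Finset.mem_filter_univ _]

/-- The Euler characteristic of a finite poset in the sense of Rota and Leinster: the total mass of
its coweighting. -/
noncomputable def eulerChar (α : Type*) [PartialOrder α] [Finite α] : ℤ :=
  letI := Fintype.ofFinite α
  ∑ x : α, coweight x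

theorem IsCoweighting.sum_eq_eulerChar [PartialOrder α] [Fintype α] {k : α → ℤ}
    (hk : IsCoweighting k) : ∑ x, k x = eulerChar α := by
  rw [hk.unique isCoweighting_coweight, eulerChar]
  congr!

theorem eulerChar_of_isEmpty [PartialOrder α] [IsEmpty α] : eulerChar α = 0 :=
  Finset.sum_of_isEmpty _

theorem eulerChar_eq_of_galoisConnection [PartialOrder α] [PartialOrder β] [Finite α] [Finite β]
    {l : α → β} {u : β → α} (gc : GaloisConnection l u) : eulerChar α = eulerChar β := by
  classical
  have := Fintype.ofFinite α
  have := Fintype.ofFinite β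
  rw [← isCoweighting_coweight.sum_eq_eulerChar,
    ← (isCoweighting_coweight.map_of_galoisConnection gc).sum_eq_eulerChar]
  exact (Finset.sum_fiberwise Finset.univ l coweight).symm

end EulerChar

section FixedPoints

variable {α : Type*} [PartialOrder α] [Finite α]

theorem exists_isLeast_fixedPoints_ge (φ : α →o α) {x : α} (hx : x ≤ φ x) :
    ∃ w, IsLeast {y ∈ fixedPoints φ | x ≤ y} w := by
  induction x using WellFoundedGT.induction with
  | ind x ih =>
    by_cases hfix : φ x = x
    · exact ⟨x, ⟨hfix, le_rfl⟩, fun y hy => hy.2⟩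
    · obtain ⟨w, ⟨hw, hxw⟩, hleast⟩ := ih (φ x) (hx.lt_of_ne' hfix) (φ.mono hx)
      refine ⟨w, ⟨hw, hx.trans hxw⟩, fun y ⟨hy, hxy⟩ => hleast ⟨hy, ?_⟩⟩
      exact (φ.mono hxy).trans_eq hy

theorem exists_isGreatest_fixedPoints_le (φ : α →o α) {x : α} (hx : φ x ≤ x) :
    ∃ w, IsGreatest {y ∈ fixedPoints φ | y ≤ x} w :=
  exists_isLeast_fixedPoints_ge φ.dual hx

theorem eulerChar_fixedPoints_eq_of_le {φ ψ : α →o α} (hle : φ ≤ ψ) :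
    eulerChar (fixedPoints φ) = eulerChar (fixedPoints ψ) := by
  have h_up (x : fixedPoints φ) : ∃ w, IsLeast {y ∈ fixedPoints ψ | x ≤ y} w :=
    exists_isLeast_fixedPoints_ge ψ (x.2.symm.trans_le (hle x))
  have h_down (y : fixedPoints ψ) : ∃ w, IsGreatest {x ∈ fixedPoints φ | x ≤ y} w :=
    exists_isGreatest_fixedPoints_le φ ((hle y).trans_eq y.2)
  choose l hl using h_up
  choose u hu using h_down
  refine eulerChar_eq_of_galoisConnection (l := fun x => ⟨l x, (hl x).1.1⟩)
    (u := fun y => ⟨u y, (hu y).1.1⟩) fun x y => ?_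
  calc l x ≤ y ↔ (x : α) ≤ y := ⟨(hl x).1.2.trans, fun h => (hl x).2 ⟨y.2, h⟩⟩
    _ ↔ (x : α) ≤ u y := ⟨fun h => (hu y).2 ⟨x.2, h⟩, fun h => h.trans (hu y).1.2⟩

end FixedPoints

section Contiguous

variable {X Y : Type*} [DecidableEq Y] {κ : X → X → Prop} {lam : Y → Y → Prop} {f g : X → Y}

/-- Contiguity of simplicial maps between clique complexes: `f(S) ∪ g(S)` is a clique for every
clique `S`. In particular `Contiguous κ lam f f` says that `f` is simplicial. -/
def Contiguous (κ : X → X → Prop) (lam : Y → Y → Prop) (f g : X → Y) : Prop :=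
  ∀ S : Finset X, IsClique κ S → IsClique lam (S.image f ∪ S.image g)

theorem IsClique.subset {S T : Finset X} (hT : IsClique κ T) (hS : S.Nonempty) (hST : S ⊆ T) :
    IsClique κ S :=
  ⟨hS, fun x hx y hy => hT.2 x (hST hx) y (hST hy)⟩

theorem Contiguous.symm (h : Contiguous κ lam f g) : Contiguous κ lam g f := fun S hS =>
  Finset.union_comm (S.image f) (S.image g) ▸ h S hS

theorem Contiguous.left (h : Contiguous κ lam f g) : Contiguous κ lam f f := fun S hS => by
  rw [Finset.union_self]
  exact (h S hS).subset (hS.1.image f) Finset.subset_union_left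

theorem contiguous_id [DecidableEq X] : Contiguous κ κ id id := fun S hS => by
  rwa [Finset.image_id, Finset.union_self]

theorem StrongHomotopic.reflTransGen_contiguous (h : StrongHomotopic κ lam f g) :
    ReflTransGen (Contiguous κ lam) f g := by
  obtain ⟨m, H, hH0, hHm, hH⟩ := h
  obtain rfl : (H · 0) = f := funext hH0
  obtain rfl : (H · m) = g := funext hHm
  have contiguous_succ : ∀ t < m, Contiguous κ lam (H · t) (H · (t + 1)) := by
    intro t ht S hS
    have exists_level : ∀ a ∈ S.image (H · t) ∪ S.image (H · (t + 1)),
        ∃ x ∈ S, ∃ s, t ≤ s ∧ s ≤ t + 1 ∧ H x s = a := by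
      intro a ha
      rcases Finset.mem_union.mp ha with ha | ha <;> obtain ⟨x, hx, rfl⟩ := Finset.mem_image.mp ha
      · exact ⟨x, hx, t, le_rfl, t.le_succ, rfl⟩
      · exact ⟨x, hx, t + 1, t.le_succ, le_rfl, rfl⟩
    refine ⟨(hS.1.image _).mono Finset.subset_union_left, fun a ha b hb hab => ?_⟩
    obtain ⟨x, hx, s, hts, hst, rfl⟩ := exists_level a ha
    obtain ⟨y, hy, s', hts', hst', rfl⟩ := exists_level b hb
    have hxy : x = y ∨ κ x y := or_iff_not_imp_left.mpr (hS.2 x hx y hy)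
    have hne : x ≠ y ∨ s ≠ s' := by
      by_contra! heq
      exact hab (by rw [heq.1, heq.2])
    exact (hH x y s s' (by lia) (by lia) hxy (by lia) hne).resolve_left hab
  exact (reflTransGen_of_succ_of_le (fun s t => Contiguous κ lam (H · s) (H · t))
    (fun t ht => contiguous_succ t ht.2) m.zero_le).lift (fun t x => H x t) fun _ _ => id

end Contiguous

section CliquePoset

variable {X Y : Type*} {κ : X → X → Prop}

/-- The face poset of the clique complex of `(X, κ)`: the cliques, ordered by inclusion. -/
abbrev CliquePoset (κ : X → X → Prop) : Type _ :=
  {S : Finset X // IsClique κ S}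

theorem sum_powerset_erase_empty_neg_one_pow_card_sub_one [DecidableEq X] {S : Finset X}
    (hS : S.Nonempty) : ∑ T ∈ S.powerset.erase ∅, (-1 : ℤ) ^ (T.card - 1) = 1 := by
  have shift_sign : ∀ T ∈ S.powerset.erase ∅, (-1 : ℤ) ^ (T.card - 1) = -(-1) ^ T.card := by
    intro T hT
    have hcard : T.card ≠ 0 := Finset.card_ne_zero.mpr
      (Finset.nonempty_iff_ne_empty.mpr (Finset.ne_of_mem_erase hT))
    rw [← pow_sub_one_mul hcard (-1 : ℤ), mul_neg_one, neg_neg]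
  rw [Finset.sum_congr rfl shift_sign, Finset.sum_neg_distrib,
    Finset.sum_erase_eq_sub (Finset.empty_mem_powerset S),
    Finset.sum_powerset_neg_one_pow_card_of_nonempty hS]
  simp

theorem isCoweighting_neg_one_pow_card_sub_one [Fintype (CliquePoset κ)] :
    IsCoweighting fun S : CliquePoset κ => (-1) ^ (S.1.card - 1) := by
  classical
  intro S
  have faces_eq : (Finset.univ.filter (· ≤ S)).map (Function.Embedding.subtype _) =
      S.1.powerset.erase ∅ := by
    ext T
    simp only [Finset.mem_map, Finset.mem_filter_univ, Function.Embedding.subtype_apply,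
      Finset.mem_erase, Finset.mem_powerset]
    constructor
    · rintro ⟨T, hTS, rfl⟩
      exact ⟨T.2.1.ne_empty, hTS⟩
    · rintro ⟨hT, hTS⟩
      exact ⟨⟨T, S.2.subset (Finset.nonempty_iff_ne_empty.mpr hT) hTS⟩, hTS, rfl⟩
  have sum_faces := sum_powerset_erase_empty_neg_one_pow_card_sub_one S.2.1
  simp only [← faces_eq, Finset.sum_map, Function.Embedding.subtype_apply] at sum_faces
  convert sum_faces

theorem eulerChar_cliquePoset [Fintype X] : eulerChar (CliquePoset κ) = simpEuler κ := by
  classical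
  rw [← isCoweighting_neg_one_pow_card_sub_one.sum_eq_eulerChar, simpEuler, ← Finset.sum_filter]
  exact (Finset.sum_subtype _ (by simp) fun S : Finset X => (-1 : ℤ) ^ (S.card - 1)).symm

/-- The monotone map `S ↦ f(S) ∪ g(S)` of cliques given by contiguous maps `f` and `g`; for `f = g`
it is the map of cliques induced by the simplicial map `f`. -/
def Contiguous.cliqueMap [DecidableEq Y] {lam : Y → Y → Prop} {f g : X → Y}
    (h : Contiguous κ lam f g) : CliquePoset κ →o CliquePoset lam where
  toFun S := ⟨S.1.image f ∪ S.1.image g, h S.1 S.2⟩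
  monotone' _ _ hST :=
    Finset.union_subset_union (Finset.image_subset_image hST) (Finset.image_subset_image hST)

variable [DecidableEq X] {f g : X → X}

theorem Contiguous.mem_fixedPoints_cliqueMap_self (h : Contiguous κ κ f f) {S : CliquePoset κ} :
    S ∈ fixedPoints h.cliqueMap ↔ S.1.image f = S.1 := by
  simp [Function.IsFixedPt, cliqueMap, Subtype.ext_iff]

theorem Contiguous.eulerChar_fixedPoints_eq [Finite X] (h : Contiguous κ κ f g) :
    eulerChar (fixedPoints h.left.cliqueMap) = eulerChar (fixedPoints h.symm.left.cliqueMap) :=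
  calc eulerChar (fixedPoints h.left.cliqueMap)
      = eulerChar (fixedPoints h.cliqueMap) := eulerChar_fixedPoints_eq_of_le fun _ =>
        Finset.union_subset Finset.subset_union_left Finset.subset_union_left
    _ = eulerChar (fixedPoints h.symm.left.cliqueMap) := Eq.symm <|
        eulerChar_fixedPoints_eq_of_le fun _ =>
          Finset.union_subset Finset.subset_union_right Finset.subset_union_right

theorem exists_eulerChar_fixedPoints_eq_of_reflTransGen [Finite X]
    (hfg : ReflTransGen (Contiguous κ κ) f g) (hg : Contiguous κ κ g g) :
    ∃ hf : Contiguous κ κ f f,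
      eulerChar (fixedPoints hf.cliqueMap) = eulerChar (fixedPoints hg.cliqueMap) := by
  induction hfg using ReflTransGen.head_induction_on with
  | refl => exact ⟨hg, rfl⟩
  | head hff' _ ih =>
    obtain ⟨_, heq⟩ := ih
    exact ⟨hff'.left, hff'.eulerChar_fixedPoints_eq.trans heq⟩

theorem eulerChar_fixedPoints_cliqueMap_id [Fintype X] :
    eulerChar (fixedPoints (contiguous_id (κ := κ)).cliqueMap) = simpEuler κ := by
  rw [← eulerChar_cliquePoset]
  exact eulerChar_eq_of_galoisConnection (l := Subtype.val)
    (u := fun S => ⟨S, contiguous_id.mem_fixedPoints_cliqueMap_self.mpr Finset.image_id⟩)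
    fun _ _ => Iff.rfl

theorem exists_isClique_image_eq_of_strongHomotopic_id [Fintype X] (hχ : simpEuler κ ≠ 0)
    (hfid : StrongHomotopic κ κ f id) : ∃ S, IsClique κ S ∧ S.image f = S := by
  obtain ⟨hf, hfix⟩ := exists_eulerChar_fixedPoints_eq_of_reflTransGen
    hfid.reflTransGen_contiguous contiguous_id
  rw [eulerChar_fixedPoints_cliqueMap_id] at hfix
  have hne : Nonempty (fixedPoints hf.cliqueMap) := by
    by_contra! hempty
    exact hχ (hfix.symm.trans eulerChar_of_isEmpty)
  obtain ⟨S, hS⟩ := hne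
  exact ⟨S, S.2, hf.mem_fixedPoints_cliqueMap_self.mp hS⟩

end CliquePoset

theorem IsClique.approxFix {X : Type*} {κ : X → X → Prop} {S : Finset X} (hS : IsClique κ S)
    {f : X → X} {x : X} (hx : x ∈ S) (hfx : f x ∈ S) : ApproxFix κ f x :=
  or_iff_not_imp_left.mpr fun hne => hS.2 x hx (f x) hfx (Ne.symm hne)

theorem fixed_or_approx_of_strongHomotopic_id_general {X : Type*} [Fintype X] {κ : X → X → Prop}
    (hχ : simpEuler κ ≠ 0) {f : X → X} (hfid : StrongHomotopic κ κ f id) :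
    (∃ x, f x = x) ∨ ∃ x y, x ≠ y ∧ ApproxFix κ f x ∧ ApproxFix κ f y := by
  classical
  obtain ⟨S, hS, hfS⟩ := exists_isClique_image_eq_of_strongHomotopic_id hχ hfid
  have hmaps : ∀ x ∈ S, f x ∈ S := Finset.image_subset_iff.mp hfS.subset
  obtain ⟨x, hx⟩ := hS.1
  have hfx : f x ∈ S := hmaps x hx
  refine or_iff_not_imp_left.mpr fun hfree => ⟨x, f x, fun heq => hfree ⟨x, heq.symm⟩, ?_, ?_⟩
  · exact hS.approxFix hx hfx
  · exact hS.approxFix hfx (hmaps _ hfx)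

/-- Let `(X,κ)` be a finite digital image whose simplicial Euler characteristic `χ(X)` is
nonzero, and let `f : X → X` be a continuous self-map strongly homotopic to the identity.
Then `f` has a fixed point or at least two distinct approximate fixed points. -/
theorem fixed_or_approx_of_strongHomotopic_id {X : Type*} [Fintype X] [DecidableEq X]
    (κ : X → X → Prop) (hsym : Symmetric κ) (hirr : Irreflexive κ)
    (hχ : simpEuler κ ≠ 0)
    (f : X → X) (hf : DigCont κ κ f) (hfid : StrongHomotopic κ κ f id) :
    (∃ x, f x = x) ∨ ∃ x y, x ≠ y ∧ ApproxFix κ f x ∧ ApproxFix κ f y :=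
  fixed_or_approx_of_strongHomotopic_id_general hχ hfid
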